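/- arXiv:0901.0342 — 2 statements merged into one kernel-verified Lean document; each statement's English description precedes it below -/
import Mathlib

section
/- Let r ≥ 1 and let (m₁, m₂) and (n₁, n₂) be commuting pairs of r×r complex matrices. Suppose g, h ∈ GL_r(ℂ) are such that g m₁ g⁻¹, g m₂ g⁻¹ are upper triangular and h n₁ h⁻¹, h n₂ h⁻¹ are upper triangular. Then the topological closures of the GL_r(ℂ)-orbits of (m₁, m₂) and of (n₁, n₂) have nonempty intersection if and only if the multiset {((g m₁ g⁻¹)_{jj}, (g m₂ g⁻¹)_{jj}) : j ∈ Fin r} equals the multiset {((h n₁ h⁻¹)_{jj}, (h n₂ h⁻¹)_{jj}) : j ∈ Fin r}. Thus the points of the categorical quotient of the commuting variety, i.e. the equivalence classes of commuting pairs under the relation "orbit closures intersect", are classified by multisets of r points of ℂ², realizing the symmetric product S^r(ℂ²). -/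
open Matrix

/-- The orbit of a pair of `r × r` complex matrices under the simultaneous
conjugation action of `GL r ℂ`. -/
def conjOrbit (r : ℕ) (m₁ m₂ : Matrix (Fin r) (Fin r) ℂ) :
    Set (Matrix (Fin r) (Fin r) ℂ × Matrix (Fin r) (Fin r) ℂ) :=
  {p | ∃ g : GL (Fin r) ℂ, p = (g.val * m₁ * g⁻¹.val, g.val * m₂ * g⁻¹.val)}

/-- The multiset of pairs of diagonal entries of a pair of `r × r` complex matrices. -/
def diagPairs (r : ℕ) (A B : Matrix (Fin r) (Fin r) ℂ) : Multiset (ℂ × ℂ) :=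
  (Finset.univ : Finset (Fin r)).val.map fun j => (A j j, B j j)

/-!
The coefficients of the characteristic polynomial of `m₁ + c • m₂` are continuous and invariant
under conjugation, so they are constant on orbit closures. For an upper triangular pair with
diagonal entries `(aⱼ, bⱼ)` the roots are the `aⱼ + c * bⱼ`, and for a generic `c` these determine
the multiset of the `(aⱼ, bⱼ)`.

Conversely, conjugating an upper triangular pair by `diag(t⁻¹, t⁻², …)` multiplies its
`(i, j)` entry by `t ^ (j - i)`; letting `t → 0`, the diagonal part of the pair lies in its orbit
closure. Diagonal pairs with the same multiset of entries are conjugate by a permutation matrix.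
-/

open MulAction ConjAct Topology

section Multisets

variable {ι α β K : Type*}

theorem multiset_eq_of_map_eq_of_injOn {f : α → β} {s t : Multiset α}
    (hf : Set.InjOn f {x | x ∈ s + t}) (h : s.map f = t.map f) : s = t := by
  rcases isEmpty_or_nonempty α with _ | _
  · exact Subsingleton.elim s t
  have map_invFunOn_map {u : Multiset α} (hu : u ≤ s + t) :
      (u.map f).map (Function.invFunOn f {x | x ∈ s + t}) = u := by
    rw [Multiset.map_map]
    exact (Multiset.map_congr rfl fun x hx ↦
      hf.leftInvOn_invFunOn (Multiset.mem_of_le hu hx)).trans u.map_id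
  rw [← map_invFunOn_map (Multiset.le_add_right s t), h,
    map_invFunOn_map (Multiset.le_add_left t s)]

theorem exists_perm_comp_eq_of_map_univ_eq [Fintype ι] {f g : ι → α}
    (h : Finset.univ.val.map f = Finset.univ.val.map g) : ∃ σ : Equiv.Perm ι, g ∘ σ = f := by
  classical
  have fiberEquiv (a : α) : Nonempty ({i // f i = a} ≃ {i // g i = a}) := by
    have hcount := congrArg (Multiset.count a) h
    simp only [Multiset.count_map, eq_comm (a := a)] at hcount
    rw [← Fintype.card_eq, Fintype.card_subtype, Fintype.card_subtype]
    exact hcount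
  exact ⟨Equiv.ofFiberEquiv fun a ↦ (fiberEquiv a).some, funext (Equiv.ofFiberEquiv_map _)⟩

variable [Field K] [Infinite K]

theorem exists_injOn_fst_add_mul_snd (s : Finset (K × K)) :
    ∃ c : K, Set.InjOn (fun z : K × K ↦ z.1 + c * z.2) s := by
  classical
  obtain ⟨c, hc⟩ := Infinite.exists_notMem_finset
    ((s ×ˢ s).image fun q ↦ (q.2.1 - q.1.1) / (q.1.2 - q.2.2))
  refine ⟨c, fun x hx y hy (hxy : x.1 + c * x.2 = y.1 + c * y.2) ↦ ?_⟩
  suffices hsnd : x.2 = y.2 by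
    exact Prod.ext (by rwa [hsnd, add_left_inj] at hxy) hsnd
  by_contra hsnd
  refine hc (Finset.mem_image.2 ⟨(x, y), Finset.mk_mem_product hx hy, ?_⟩)
  rw [div_eq_iff (sub_ne_zero.2 hsnd)]
  linear_combination -hxy

theorem multiset_eq_of_forall_map_fst_add_mul_snd_eq {s t : Multiset (K × K)}
    (h : ∀ c : K, s.map (fun z ↦ z.1 + c * z.2) = t.map (fun z ↦ z.1 + c * z.2)) : s = t := by
  classical
  obtain ⟨c, hc⟩ := exists_injOn_fst_add_mul_snd (s + t).toFinset
  refine multiset_eq_of_map_eq_of_injOn (fun x hx y hy ↦ ?_) (h c)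
  exact hc (Multiset.mem_toFinset.2 hx) (Multiset.mem_toFinset.2 hy)

end Multisets

/-- The multiset of pairs of corresponding diagonal entries of a pair of matrices; it extends
`diagPairs` to an arbitrary finite index type and arbitrary entries. -/
def jointDiag {n K : Type*} [Fintype n] (p : Matrix n n K × Matrix n n K) : Multiset (K × K) :=
  Finset.univ.val.map fun i ↦ (p.1 i i, p.2 i i)

theorem roots_charpoly_add_smul {n R : Type*} [Fintype n] [LinearOrder n] [CommRing R]
    [IsDomain R] {p : Matrix n n R × Matrix n n R}
    (h₁ : p.1.IsUpperTriangular) (h₂ : p.2.IsUpperTriangular) (c : R) :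
    (p.1 + c • p.2).charpoly.roots = (jointDiag p).map fun z ↦ z.1 + c * z.2 := by
  have htri : (p.1 + c • p.2).IsUpperTriangular :=
    h₁.add fun i j hij ↦ by rw [Matrix.smul_apply, h₂ hij, smul_zero]
  have hroots := Polynomial.roots_multiset_prod_X_sub_C ((jointDiag p).map fun z ↦ z.1 + c * z.2)
  rw [charpoly_of_isUpperTriangular _ htri, ← hroots, jointDiag, Multiset.map_map,
    Multiset.map_map]
  rfl

section WeightScaling

variable {n R : Type*} [MonoidWithZero R]

/-- The family of matrices with entries `t ^ (w j - w i) * A i j`, which for a unit `t` is the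
conjugate of `A` by the one-parameter subgroup `diag(t ^ (-w i))` and extends polynomially to
`t = 0`. The subtraction is truncated, so this reading is limited to matrices `A` that are block
triangular with respect to the weight `w`. -/
def weightScaling (w : n → ℕ) (A : Matrix n n R) (t : R) : Matrix n n R :=
  of fun i j ↦ t ^ (w j - w i) * A i j

theorem weightScaling_zero [DecidableEq n] {w : n → ℕ} (hw : Function.Injective w)
    {A : Matrix n n R} (hA : A.BlockTriangular w) : weightScaling w A 0 = diagonal A.diag := by
  ext i j
  rcases lt_trichotomy (w i) (w j) with hij | hij | hij
  · simp [weightScaling, (Nat.sub_pos_of_lt hij).ne',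
      diagonal_apply_ne _ (ne_of_apply_ne w hij.ne)]
  · obtain rfl := hw hij
    simp [weightScaling]
  · simp [weightScaling, hA hij, diagonal_apply_ne _ (ne_of_apply_ne w hij.ne')]

theorem continuous_weightScaling [TopologicalSpace R] [ContinuousMul R] (w : n → ℕ)
    (A : Matrix n n R) : Continuous (weightScaling w A) :=
  continuous_matrix fun i j ↦ by
    simp only [weightScaling, of_apply]
    fun_prop

end WeightScaling

section Conjugation

variable {n R : Type*} [Fintype n] [DecidableEq n] [CommRing R]

/-- The invertible diagonal matrix with the given units on the diagonal, as an element of the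
group acting by conjugation. -/
def diagonalConj (d : n → Rˣ) : ConjAct (GL n R) :=
  toConjAct (Units.map (diagonalRingHom n R).toMonoidHom (MulEquiv.piUnits.symm d))

theorem diagonalConj_smul_apply (d : n → Rˣ) (A : Matrix n n R) (i j : n) :
    (diagonalConj d • A) i j = d i * A i j * ↑(d j)⁻¹ := by
  have hval : (ofConjAct (diagonalConj d)).val = diagonal fun i ↦ (d i : R) := rfl
  have hinv : (ofConjAct (diagonalConj d))⁻¹.val = diagonal fun i ↦ (↑(d i)⁻¹ : R) := rfl
  rw [units_smul_def, hval, hinv, mul_diagonal, diagonal_mul]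

theorem diagonalConj_smul_eq_weightScaling {w : n → ℕ} {A : Matrix n n R}
    (hA : A.BlockTriangular w) (t : Rˣ) :
    diagonalConj (fun i ↦ (t ^ w i)⁻¹) • A = weightScaling w A t := by
  ext i j
  rw [diagonalConj_smul_apply, weightScaling, of_apply]
  rcases lt_or_ge (w j) (w i) with hij | hij
  · simp only [hA hij, mul_zero, zero_mul]
  · have hpow : (t : R) ^ (w j - w i) = ↑(t ^ w i)⁻¹ * ↑(t ^ w j) := by
      rw [← Units.val_mul, ← Units.val_pow_eq_pow_val, pow_sub t hij, mul_comm]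
    rw [hpow, inv_inv, mul_right_comm]

theorem diagonal_comp_perm_mem_orbit (σ : Equiv.Perm n) (a b : n → R) :
    (diagonal (a ∘ σ), diagonal (b ∘ σ)) ∈
      orbit (ConjAct (GL n R)) (diagonal a, diagonal b) := by
  let P : GL n R := ⟨σ.permMatrix R, σ⁻¹.permMatrix R,
    by rw [← permMatrix_mul, inv_mul_cancel, permMatrix_one],
    by rw [← permMatrix_mul, mul_inv_cancel, permMatrix_one]⟩
  have hP (d : n → R) : toConjAct P • diagonal d = diagonal (d ∘ σ) :=
    calc toConjAct P • diagonal d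
      _ = σ.permMatrix R * diagonal d * σ⁻¹.permMatrix R := rfl
      _ = (diagonal d).submatrix σ σ := by
        rw [PEquiv.toMatrix_toPEquiv_mul, PEquiv.mul_toMatrix_toPEquiv, submatrix_submatrix]
        rfl
      _ = diagonal (d ∘ σ) := submatrix_diagonal_equiv d σ
  exact ⟨toConjAct P, Prod.ext (hP a) (hP b)⟩

theorem charpoly_add_smul_eq_of_mem_orbit {p q : Matrix n n R × Matrix n n R}
    (h : q ∈ orbit (ConjAct (GL n R)) p) (c : R) :
    (q.1 + c • q.2).charpoly = (p.1 + c • p.2).charpoly := by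
  obtain ⟨g, rfl⟩ := h
  have hg : (g • p).1 + c • (g • p).2 = g • (p.1 + c • p.2) := by
    rw [smul_add, smul_comm g c, Prod.smul_fst, Prod.smul_snd]
  rw [hg, units_smul_def, coe_units_inv, charpoly_units_conj]

theorem charpoly_add_smul_eq_of_mem_closure_orbit [TopologicalSpace R]
    [IsTopologicalRing R] [T2Space R] [IsDomain R] [Infinite R]
    {p q : Matrix n n R × Matrix n n R}
    (hq : q ∈ closure (orbit (ConjAct (GL n R)) p)) (c : R) :
    (q.1 + c • q.2).charpoly = (p.1 + c • p.2).charpoly := by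
  refine Polynomial.funext fun z ↦ ?_
  have hcont : Continuous fun x : Matrix n n R × Matrix n n R ↦
      (x.1 + c • x.2).charpoly.eval z := by
    simp only [eval_charpoly]
    fun_prop
  refine closure_minimal (fun x hx ↦ ?_) (isClosed_eq hcont continuous_const) hq
  exact congrArg (Polynomial.eval z) (charpoly_add_smul_eq_of_mem_orbit hx c)

end Conjugation

section OrbitClosures

variable {n K : Type*} [Fintype n] [Field K] [TopologicalSpace K] [IsTopologicalRing K]

theorem jointDiag_eq_of_closure_orbit_inter_nonempty [LinearOrder n] [T2Space K] [Infinite K]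
    {p q : Matrix n n K × Matrix n n K}
    (hp₁ : p.1.IsUpperTriangular) (hp₂ : p.2.IsUpperTriangular)
    (hq₁ : q.1.IsUpperTriangular) (hq₂ : q.2.IsUpperTriangular)
    (h : (closure (orbit (ConjAct (GL n K)) p) ∩
      closure (orbit (ConjAct (GL n K)) q)).Nonempty) :
    jointDiag p = jointDiag q := by
  obtain ⟨x, hxp, hxq⟩ := h
  refine multiset_eq_of_forall_map_fst_add_mul_snd_eq fun c ↦ ?_
  rw [← roots_charpoly_add_smul hp₁ hp₂, ← roots_charpoly_add_smul hq₁ hq₂,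
    ← charpoly_add_smul_eq_of_mem_closure_orbit hxp,
    ← charpoly_add_smul_eq_of_mem_closure_orbit hxq]

variable [(𝓝[≠] (0 : K)).NeBot]

theorem diagonal_diag_mem_closure_orbit [DecidableEq n] {w : n → ℕ} (hw : Function.Injective w)
    {p : Matrix n n K × Matrix n n K} (h₁ : p.1.BlockTriangular w) (h₂ : p.2.BlockTriangular w) :
    (diagonal p.1.diag, diagonal p.2.diag) ∈ closure (orbit (ConjAct (GL n K)) p) := by
  have scaling_mem_orbit (t : K) (ht : t ∈ ({0}ᶜ : Set K)) :
      (weightScaling w p.1 t, weightScaling w p.2 t) ∈ orbit (ConjAct (GL n K)) p := by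
    lift t to Kˣ using isUnit_iff_ne_zero.2 ht
    exact ⟨_, Prod.ext (diagonalConj_smul_eq_weightScaling h₁ t)
      (diagonalConj_smul_eq_weightScaling h₂ t)⟩
  have zero_mem_closure : (0 : K) ∈ closure {0}ᶜ := mem_closure_iff_nhdsWithin_neBot.2 ‹_›
  rw [← weightScaling_zero hw h₁, ← weightScaling_zero hw h₂]
  exact map_mem_closure (f := fun t ↦ (weightScaling w p.1 t, weightScaling w p.2 t))
    ((continuous_weightScaling w p.1).prodMk (continuous_weightScaling w p.2)) zero_mem_closure
    scaling_mem_orbit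

theorem diagonal_diag_mem_closure_orbit_of_isUpperTriangular [LinearOrder n]
    {p : Matrix n n K × Matrix n n K}
    (h₁ : p.1.IsUpperTriangular) (h₂ : p.2.IsUpperTriangular) :
    (diagonal p.1.diag, diagonal p.2.diag) ∈ closure (orbit (ConjAct (GL n K)) p) := by
  let e : n ≃o Fin (Fintype.card n) := (Fintype.orderIsoFinOfCardEq n rfl).symm
  have he {A : Matrix n n K} (hA : A.IsUpperTriangular) :
      A.BlockTriangular fun i ↦ (e i : ℕ) := fun _ _ hij ↦ hA (e.lt_iff_lt.1 hij)
  exact diagonal_diag_mem_closure_orbit (Fin.val_injective.comp e.injective) (he h₁) (he h₂)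

theorem closure_orbit_inter_nonempty_of_jointDiag_eq [LinearOrder n]
    {p q : Matrix n n K × Matrix n n K}
    (hp₁ : p.1.IsUpperTriangular) (hp₂ : p.2.IsUpperTriangular)
    (hq₁ : q.1.IsUpperTriangular) (hq₂ : q.2.IsUpperTriangular) (h : jointDiag p = jointDiag q) :
    (closure (orbit (ConjAct (GL n K)) p) ∩
      closure (orbit (ConjAct (GL n K)) q)).Nonempty := by
  obtain ⟨σ, hσ⟩ := exists_perm_comp_eq_of_map_univ_eq h
  have hdiag₁ : q.1.diag ∘ σ = p.1.diag := congrArg (Prod.fst ∘ ·) hσ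
  have hdiag₂ : q.2.diag ∘ σ = p.2.diag := congrArg (Prod.snd ∘ ·) hσ
  obtain ⟨g, hg⟩ := diagonal_comp_perm_mem_orbit σ q.1.diag q.2.diag
  refine ⟨_, diagonal_diag_mem_closure_orbit_of_isUpperTriangular hp₁ hp₂, ?_⟩
  rw [← hdiag₁, ← hdiag₂, ← hg]
  exact smul_closure_orbit_subset g q (Set.smul_mem_smul_set
    (diagonal_diag_mem_closure_orbit_of_isUpperTriangular hq₁ hq₂))

theorem stmt6_general [LinearOrder n] [T2Space K] {p q : Matrix n n K × Matrix n n K}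
    {g h : ConjAct (GL n K)}
    (hg₁ : (g • p).1.IsUpperTriangular) (hg₂ : (g • p).2.IsUpperTriangular)
    (hh₁ : (h • q).1.IsUpperTriangular) (hh₂ : (h • q).2.IsUpperTriangular) :
    (closure (orbit (ConjAct (GL n K)) p) ∩
        closure (orbit (ConjAct (GL n K)) q)).Nonempty ↔
      jointDiag (g • p) = jointDiag (h • q) := by
  have : Infinite K := Set.infinite_univ_iff.1 (infinite_of_mem_nhds (0 : K) Filter.univ_mem)
  rw [← orbit_smul g p, ← orbit_smul h q]
  exact ⟨jointDiag_eq_of_closure_orbit_inter_nonempty hg₁ hg₂ hh₁ hh₂,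
    closure_orbit_inter_nonempty_of_jointDiag_eq hg₁ hg₂ hh₁ hh₂⟩

end OrbitClosures

theorem conjOrbit_eq_orbit (r : ℕ) (m₁ m₂ : Matrix (Fin r) (Fin r) ℂ) :
    conjOrbit r m₁ m₂ = orbit (ConjAct (GL (Fin r) ℂ)) (m₁, m₂) :=
  Set.ext fun _ ↦ exists_congr fun _ ↦ eq_comm

/-- The orbit closures of two commuting pairs intersect iff the multisets of joint
eigenvalues (read off from any simultaneous triangularizations) agree: the categorical
quotient of the commuting variety is the symmetric product `Symᵣ(ℂ²)`. -/
theorem stmt6 (r : ℕ) (hr : 1 ≤ r) (m₁ m₂ n₁ n₂ : Matrix (Fin r) (Fin r) ℂ)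
    (hm : m₁ * m₂ = m₂ * m₁) (hn : n₁ * n₂ = n₂ * n₁) (g h : GL (Fin r) ℂ)
    (hg₁ : ∀ i j : Fin r, j < i → (g.val * m₁ * g⁻¹.val) i j = 0)
    (hg₂ : ∀ i j : Fin r, j < i → (g.val * m₂ * g⁻¹.val) i j = 0)
    (hh₁ : ∀ i j : Fin r, j < i → (h.val * n₁ * h⁻¹.val) i j = 0)
    (hh₂ : ∀ i j : Fin r, j < i → (h.val * n₂ * h⁻¹.val) i j = 0) :
    (closure (conjOrbit r m₁ m₂) ∩ closure (conjOrbit r n₁ n₂)).Nonempty ↔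
      diagPairs r (g.val * m₁ * g⁻¹.val) (g.val * m₂ * g⁻¹.val) =
        diagPairs r (h.val * n₁ * h⁻¹.val) (h.val * n₂ * h⁻¹.val) := by
  rw [conjOrbit_eq_orbit, conjOrbit_eq_orbit]
  exact stmt6_general (g := toConjAct g) (h := toConjAct h) (p := (m₁, m₂)) (q := (n₁, n₂))
    hg₁ hg₂ hh₁ hh₂
end

section
/- Let r ≥ 1. For a triple (m₁, m₂, v) where (m₁, m₂) is a commuting pair of r×r complex matrices and v ∈ ℂʳ is cyclic for (m₁, m₂), the set I(m₁, m₂, v) = {p ∈ ℂ[z₁, z₂] : p(m₁, m₂).mulVec v = 0} is an ideal of ℂ[z₁, z₂] with dim_ℂ (ℂ[z₁, z₂]/I(m₁, m₂, v)) = r, and the assignment (m₁, m₂, v) ↦ I(m₁, m₂, v) induces a bijection from the set of GL_r(ℂ)-orbits of such triples onto the set of ideals I of ℂ[z₁, z₂] with dim_ℂ (ℂ[z₁, z₂]/I) = r. This is the set-theoretic content of the identification of the GIT quotient E //_χ GL_r(ℂ) with the Hilbert scheme (𝔸²)^[r] of length-r subschemes of the affine plane. -/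
open Matrix

/-- `v` is a cyclic vector for the pair `(m₁, m₂)`: the orbit of `v` under the unital
subalgebra of `M_r(ℂ)` generated by `m₁` and `m₂` is all of `ℂʳ`. -/
def CyclicVec (r : ℕ) (m₁ m₂ : Matrix (Fin r) (Fin r) ℂ) (v : Fin r → ℂ) : Prop :=
  {w | ∃ a ∈ Algebra.adjoin ℂ {m₁, m₂}, Matrix.mulVec a v = w} = Set.univ

/-- Evaluation of a two-variable polynomial at a commuting pair of matrices, as a
`ℂ`-algebra homomorphism `ℂ[z₁, z₂] → M_r(ℂ)` (it factors through the commutative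
subalgebra generated by the pair). -/
noncomputable def evalPair (r : ℕ) (m₁ m₂ : Matrix (Fin r) (Fin r) ℂ)
    (hcomm : m₁ * m₂ = m₂ * m₁) :
    MvPolynomial (Fin 2) ℂ →ₐ[ℂ] Matrix (Fin r) (Fin r) ℂ :=
  letI : CommRing (Algebra.adjoin ℂ ({m₁, m₂} : Set (Matrix (Fin r) (Fin r) ℂ))) :=
    Algebra.adjoinCommRingOfComm ℂ (by
      rintro a (rfl | rfl) b (rfl | rfl) <;> simp [hcomm])
  (Algebra.adjoin ℂ ({m₁, m₂} : Set (Matrix (Fin r) (Fin r) ℂ))).val.comp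
    (MvPolynomial.aeval
      ![⟨m₁, Algebra.subset_adjoin (by simp)⟩, ⟨m₂, Algebra.subset_adjoin (by simp)⟩])

/-- The ideal `I(m₁, m₂, v) = {p ∈ ℂ[z₁, z₂] : p(m₁, m₂) v = 0}` of polynomials
annihilating the vector `v` through evaluation at the commuting pair `(m₁, m₂)`. -/
noncomputable def annIdeal (r : ℕ) (m₁ m₂ : Matrix (Fin r) (Fin r) ℂ)
    (hcomm : m₁ * m₂ = m₂ * m₁) (v : Fin r → ℂ) : Ideal (MvPolynomial (Fin 2) ℂ) where
  carrier := {p | Matrix.mulVec (evalPair r m₁ m₂ hcomm p) v = 0}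
  zero_mem' := by simp [Matrix.zero_mulVec]
  add_mem' := by
    intro a b ha hb
    simp only [Set.mem_setOf_eq, map_add, Matrix.add_mulVec] at *
    rw [ha, hb, add_zero]
  smul_mem' := by
    intro c p hp
    simp only [Set.mem_setOf_eq, smul_eq_mul, _root_.map_mul] at *
    rw [← Matrix.mulVec_mulVec, hp, Matrix.mulVec_zero]

/-!
A matrix representation `φ` of an algebra `A` and a vector `v` give the orbit map `a ↦ φ a *ᵥ v`,
whose kernel is a left ideal; `v` is cyclic exactly when this map is onto. In that case `Kⁿ` is
`A` modulo the kernel, so the kernel has codimension `n` and determines `(φ, v)` up to a change of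
basis. Conversely, the action of `A` on `A ⧸ I`, written in a basis, has the class of `1` as a
cyclic vector with annihilator `I`. Commuting pairs of matrices are the representations of
`ℂ[z₁, z₂]`.
-/

theorem exists_linearEquiv_of_ker_eq {R M V W : Type*} [Ring R] [AddCommGroup M] [Module R M]
    [AddCommGroup V] [Module R V] [AddCommGroup W] [Module R W] {f : M →ₗ[R] V} {g : M →ₗ[R] W}
    (hf : Function.Surjective f) (hg : Function.Surjective g)
    (h : LinearMap.ker f = LinearMap.ker g) : ∃ e : V ≃ₗ[R] W, ∀ x, e (f x) = g x := by
  let ef := f.quotKerEquivOfSurjective hf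
  let eg := g.quotKerEquivOfSurjective hg
  refine ⟨ef.symm ≪≫ₗ Submodule.quotEquivOfEq _ _ h ≪≫ₗ eg, fun x ↦ ?_⟩
  have hx : ef.symm (f x) = Submodule.Quotient.mk x := ef.symm_apply_eq.2 rfl
  simp only [LinearEquiv.trans_apply, hx]
  rfl

theorem exists_generalLinearGroup_mulVec_eq {R n : Type*} [CommRing R] [Fintype n] [DecidableEq n]
    (e : (n → R) ≃ₗ[R] (n → R)) :
    ∃ g : GL n R, ∀ x, g.val *ᵥ x = e x :=
  ⟨Matrix.GeneralLinearGroup.toLin.symm (.ofLinearEquiv e),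
    fun x ↦ LinearMap.toMatrix'_mulVec e.toLinearMap x⟩

section Representation

variable {K A n : Type*} [CommRing K] [Ring A] [Algebra K A] [Fintype n] [DecidableEq n]

/-- The orbit map `a ↦ φ a *ᵥ v` of a vector `v` under a matrix representation `φ` of the
algebra `A`. -/
def orbitMap (φ : A →ₐ[K] Matrix n n K) (v : n → K) : A →ₗ[K] (n → K) :=
  (Matrix.mulVecBilin K K).flip v ∘ₗ φ.toLinearMap

/-- The annihilator of a vector `v` under a matrix representation `φ` of `A`, as a left ideal
of `A`; for a representation of `ℂ[z₁, z₂]` it is the ideal `I(m₁, m₂, v)`. -/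
def orbitAnnihilator (φ : A →ₐ[K] Matrix n n K) (v : n → K) : Ideal A where
  __ := LinearMap.ker (orbitMap φ v)
  smul_mem' a b hb := by
    change φ b *ᵥ v = 0 at hb
    change φ (a * b) *ᵥ v = 0
    rw [map_mul, ← mulVec_mulVec, hb, mulVec_zero]

/-- Cyclicity of a vector for a matrix representation of `A`: its orbit is the whole space. -/
def IsCyclicVector (φ : A →ₐ[K] Matrix n n K) (v : n → K) : Prop :=
  Function.Surjective (orbitMap φ v)

theorem orbitMap_apply (φ : A →ₐ[K] Matrix n n K) (v : n → K) (a : A) :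
    orbitMap φ v a = φ a *ᵥ v :=
  rfl

theorem orbitMap_mul (φ : A →ₐ[K] Matrix n n K) (v : n → K) (a b : A) :
    orbitMap φ v (a * b) = φ a *ᵥ orbitMap φ v b := by
  simp only [orbitMap_apply, map_mul, mulVec_mulVec]

theorem mem_orbitAnnihilator {φ : A →ₐ[K] Matrix n n K} {v : n → K} {a : A} :
    a ∈ orbitAnnihilator φ v ↔ φ a *ᵥ v = 0 :=
  Iff.rfl

theorem restrictScalars_orbitAnnihilator (φ : A →ₐ[K] Matrix n n K) (v : n → K) :
    (orbitAnnihilator φ v).restrictScalars K = LinearMap.ker (orbitMap φ v) :=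
  rfl

theorem finrank_quotient_orbitAnnihilator [Nontrivial K] {φ : A →ₐ[K] Matrix n n K} {v : n → K}
    (hv : IsCyclicVector φ v) :
    Module.finrank K (A ⧸ orbitAnnihilator φ v) = Fintype.card n :=
  calc Module.finrank K (A ⧸ orbitAnnihilator φ v)
      = Module.finrank K (A ⧸ LinearMap.ker (orbitMap φ v)) :=
        (Submodule.Quotient.restrictScalarsEquiv K (orbitAnnihilator φ v)).symm.finrank_eq
    _ = Module.finrank K (n → K) := ((orbitMap φ v).quotKerEquivOfSurjective hv).finrank_eq
    _ = Fintype.card n := Module.finrank_fintype_fun_eq_card K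

theorem orbitAnnihilator_eq_of_conj {φ ψ : A →ₐ[K] Matrix n n K} {v w : n → K} {g : GL n K}
    (hg : ∀ a, g.val * φ a * g⁻¹.val = ψ a) (hgv : g.val *ᵥ v = w) :
    orbitAnnihilator φ v = orbitAnnihilator ψ w := by
  ext a
  have hga : ψ a *ᵥ w = g.val *ᵥ (φ a *ᵥ v) := by
    rw [← hgv, mulVec_mulVec, mulVec_mulVec, (Units.mul_inv_eq_iff_eq_mul g).1 (hg a)]
  rw [mem_orbitAnnihilator, mem_orbitAnnihilator, hga,
    (mulVec_injective_of_isUnit g.isUnit).eq_iff' (mulVec_zero _)]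

theorem exists_conj_of_orbitAnnihilator_eq {φ ψ : A →ₐ[K] Matrix n n K} {v w : n → K}
    (hv : IsCyclicVector φ v) (hw : IsCyclicVector ψ w)
    (h : orbitAnnihilator φ v = orbitAnnihilator ψ w) :
    ∃ g : GL n K, (∀ a, g.val * φ a * g⁻¹.val = ψ a) ∧ g.val *ᵥ v = w := by
  have hker : LinearMap.ker (orbitMap φ v) = LinearMap.ker (orbitMap ψ w) := by
    rw [← restrictScalars_orbitAnnihilator, h, restrictScalars_orbitAnnihilator]
  obtain ⟨e, he⟩ := exists_linearEquiv_of_ker_eq hv hw hker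
  obtain ⟨g, hge⟩ := exists_generalLinearGroup_mulVec_eq e
  have hg (a : A) : g.val *ᵥ orbitMap φ v a = orbitMap ψ w a := by rw [hge, he]
  refine ⟨g, fun a ↦ (Units.mul_inv_eq_iff_eq_mul g).2 (Matrix.ext_of_mulVec_single fun i ↦ ?_), ?_⟩
  · obtain ⟨b, hb⟩ := hv (Pi.single i 1)
    rw [← hb, ← mulVec_mulVec, ← mulVec_mulVec, ← orbitMap_mul, hg, hg, orbitMap_mul]
  · simpa only [orbitMap_apply, map_one, one_mulVec] using hg 1

theorem orbitAnnihilator_eq_iff_exists_conj {φ ψ : A →ₐ[K] Matrix n n K} {v w : n → K}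
    (hv : IsCyclicVector φ v) (hw : IsCyclicVector ψ w) :
    orbitAnnihilator φ v = orbitAnnihilator ψ w ↔
      ∃ g : GL n K, (∀ a, g.val * φ a * g⁻¹.val = ψ a) ∧ g.val *ᵥ v = w :=
  ⟨exists_conj_of_orbitAnnihilator_eq hv hw,
    fun ⟨_, hg, hgv⟩ ↦ orbitAnnihilator_eq_of_conj hg hgv⟩

/-- The matrix representation of `A` on the quotient by a left ideal `I`, in the basis `b`;
it inverts `orbitAnnihilator` up to conjugation. -/
noncomputable def quotientRepresentation {I : Ideal A} (b : Module.Basis n K (A ⧸ I)) :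
    A →ₐ[K] Matrix n n K :=
  (LinearMap.toMatrixAlgEquiv b).toAlgHom.comp (Algebra.lsmul K K (A ⧸ I))

theorem orbitMap_quotientRepresentation {I : Ideal A} (b : Module.Basis n K (A ⧸ I)) (a : A) :
    orbitMap (quotientRepresentation b) (b.equivFun (Submodule.Quotient.mk 1)) a =
      b.equivFun (Submodule.Quotient.mk a) := by
  have hmul : Algebra.lsmul K K (A ⧸ I) a (Submodule.Quotient.mk 1) = Submodule.Quotient.mk a := by
    rw [Algebra.lsmul_apply, ← Submodule.Quotient.mk_smul, smul_eq_mul, mul_one]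
  rw [← hmul]
  exact LinearMap.toMatrix_mulVec_repr b b _ _

theorem isCyclicVector_quotientRepresentation {I : Ideal A} (b : Module.Basis n K (A ⧸ I)) :
    IsCyclicVector (quotientRepresentation b) (b.equivFun (Submodule.Quotient.mk 1)) := by
  intro w
  obtain ⟨a, ha⟩ := Submodule.Quotient.mk_surjective I (b.equivFun.symm w)
  exact ⟨a, by rw [orbitMap_quotientRepresentation, ha, LinearEquiv.apply_symm_apply]⟩

theorem orbitAnnihilator_quotientRepresentation {I : Ideal A} (b : Module.Basis n K (A ⧸ I)) :
    orbitAnnihilator (quotientRepresentation b) (b.equivFun (Submodule.Quotient.mk 1)) = I := by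
  ext a
  rw [mem_orbitAnnihilator, ← orbitMap_apply, orbitMap_quotientRepresentation,
    LinearEquiv.map_eq_zero_iff, Submodule.Quotient.mk_eq_zero]

end Representation

theorem stmt17_general {K A n : Type*} [Field K] [Ring A] [Algebra K A]
    [Fintype n] [DecidableEq n] [Nonempty n] :
    (∀ (φ : A →ₐ[K] Matrix n n K) (v : n → K), IsCyclicVector φ v →
      Module.finrank K (A ⧸ orbitAnnihilator φ v) = Fintype.card n) ∧
    (∀ (φ ψ : A →ₐ[K] Matrix n n K) (v w : n → K), IsCyclicVector φ v → IsCyclicVector ψ w →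
      (orbitAnnihilator φ v = orbitAnnihilator ψ w ↔
        ∃ g : GL n K, (∀ a, g.val * φ a * g⁻¹.val = ψ a) ∧ g.val *ᵥ v = w)) ∧
    (∀ I : Ideal A, Module.finrank K (A ⧸ I) = Fintype.card n →
      ∃ (φ : A →ₐ[K] Matrix n n K) (v : n → K),
        IsCyclicVector φ v ∧ orbitAnnihilator φ v = I) := by
  refine ⟨fun _ _ ↦ finrank_quotient_orbitAnnihilator,
    fun _ _ _ _ ↦ orbitAnnihilator_eq_iff_exists_conj, fun I hI ↦ ?_⟩
  have : Module.Finite K (A ⧸ I) := Module.finite_of_finrank_pos (hI ▸ Fintype.card_pos)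
  let b := (Module.finBasisOfFinrankEq K (A ⧸ I) hI).reindex (Fintype.equivFin n).symm
  exact ⟨quotientRepresentation b, _, isCyclicVector_quotientRepresentation b,
    orbitAnnihilator_quotientRepresentation b⟩

section CommutingPair

open MvPolynomial

variable {r : ℕ} {m₁ m₂ n₁ n₂ : Matrix (Fin r) (Fin r) ℂ}

theorem evalPair_X_zero (hm : m₁ * m₂ = m₂ * m₁) : evalPair r m₁ m₂ hm (X 0) = m₁ := by
  simp [evalPair]

theorem evalPair_X_one (hm : m₁ * m₂ = m₂ * m₁) : evalPair r m₁ m₂ hm (X 1) = m₂ := by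
  simp [evalPair]

theorem eq_evalPair_iff {φ : MvPolynomial (Fin 2) ℂ →ₐ[ℂ] Matrix (Fin r) (Fin r) ℂ}
    (hm : m₁ * m₂ = m₂ * m₁) : φ = evalPair r m₁ m₂ hm ↔ φ (X 0) = m₁ ∧ φ (X 1) = m₂ := by
  constructor
  · rintro rfl
    exact ⟨evalPair_X_zero hm, evalPair_X_one hm⟩
  · rintro ⟨h₁, h₂⟩
    refine MvPolynomial.algHom_ext (Fin.forall_fin_two.2 ⟨?_, ?_⟩)
    · rw [h₁, evalPair_X_zero]
    · rw [h₂, evalPair_X_one]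

theorem exists_evalPair_eq (φ : MvPolynomial (Fin 2) ℂ →ₐ[ℂ] Matrix (Fin r) (Fin r) ℂ) :
    ∃ (m₁ m₂ : Matrix (Fin r) (Fin r) ℂ) (hm : m₁ * m₂ = m₂ * m₁), evalPair r m₁ m₂ hm = φ := by
  have hm : φ (X 0) * φ (X 1) = φ (X 1) * φ (X 0) := by rw [← map_mul, mul_comm, map_mul]
  exact ⟨_, _, hm, ((eq_evalPair_iff hm).2 ⟨rfl, rfl⟩).symm⟩

theorem forall_conj_evalPair_eq_iff (hm : m₁ * m₂ = m₂ * m₁) (hn : n₁ * n₂ = n₂ * n₁)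
    (g : GL (Fin r) ℂ) :
    (∀ p, g.val * evalPair r m₁ m₂ hm p * g⁻¹.val = evalPair r n₁ n₂ hn p) ↔
      g.val * m₁ * g⁻¹.val = n₁ ∧ g.val * m₂ * g⁻¹.val = n₂ := by
  let conj := MulSemiringAction.toAlgHom ℂ (Matrix (Fin r) (Fin r) ℂ) (ConjAct.toConjAct g)
  have h := eq_evalPair_iff (φ := conj.comp (evalPair r m₁ m₂ hm)) hn
  rw [AlgHom.ext_iff, AlgHom.comp_apply, AlgHom.comp_apply, evalPair_X_zero, evalPair_X_one] at h
  exact h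

theorem range_evalPair (hm : m₁ * m₂ = m₂ * m₁) :
    (evalPair r m₁ m₂ hm).range = Algebra.adjoin ℂ {m₁, m₂} := by
  refine le_antisymm ?_ (Algebra.adjoin_le ?_)
  · rintro _ ⟨p, rfl⟩
    exact Subtype.property _
  · rintro _ (rfl | rfl)
    · exact ⟨X 0, evalPair_X_zero hm⟩
    · exact ⟨X 1, evalPair_X_one hm⟩

theorem isCyclicVector_evalPair_iff (hm : m₁ * m₂ = m₂ * m₁) {v : Fin r → ℂ} :
    IsCyclicVector (evalPair r m₁ m₂ hm) v ↔ CyclicVec r m₁ m₂ v := by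
  simp only [IsCyclicVector, Function.Surjective, orbitMap_apply, CyclicVec, ← range_evalPair hm,
    Set.eq_univ_iff_forall, Set.mem_ofPred_eq, AlgHom.mem_range, exists_exists_eq_and]

theorem annIdeal_eq_orbitAnnihilator (hm : m₁ * m₂ = m₂ * m₁) (v : Fin r → ℂ) :
    annIdeal r m₁ m₂ hm v = orbitAnnihilator (evalPair r m₁ m₂ hm) v :=
  rfl

end CommutingPair

/-- For triples `(m₁, m₂, v)` of a commuting pair with a cyclic vector:
the annihilating ideal has `r`-dimensional quotient; two such triples have the same
annihilating ideal iff they are `GL r ℂ`-conjugate; and every ideal of `ℂ[z₁, z₂]` with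
`r`-dimensional quotient arises this way.  This identifies `GL r ℂ`-orbits of such
triples with points of the Hilbert scheme `(𝔸²)^[r]`. -/
theorem stmt17 (r : ℕ) (hr : 1 ≤ r) :
    (∀ (m₁ m₂ : Matrix (Fin r) (Fin r) ℂ) (hcomm : m₁ * m₂ = m₂ * m₁) (v : Fin r → ℂ),
      CyclicVec r m₁ m₂ v →
        Module.finrank ℂ (MvPolynomial (Fin 2) ℂ ⧸ annIdeal r m₁ m₂ hcomm v) = r) ∧
    (∀ (m₁ m₂ n₁ n₂ : Matrix (Fin r) (Fin r) ℂ)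
      (hm : m₁ * m₂ = m₂ * m₁) (hn : n₁ * n₂ = n₂ * n₁) (v w : Fin r → ℂ),
      CyclicVec r m₁ m₂ v → CyclicVec r n₁ n₂ w →
        (annIdeal r m₁ m₂ hm v = annIdeal r n₁ n₂ hn w ↔
          ∃ g : GL (Fin r) ℂ, g.val * m₁ * g⁻¹.val = n₁ ∧ g.val * m₂ * g⁻¹.val = n₂ ∧
            Matrix.mulVec g.val v = w)) ∧
    (∀ I : Ideal (MvPolynomial (Fin 2) ℂ),
      Module.finrank ℂ (MvPolynomial (Fin 2) ℂ ⧸ I) = r →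
        ∃ (m₁ m₂ : Matrix (Fin r) (Fin r) ℂ) (hcomm : m₁ * m₂ = m₂ * m₁) (v : Fin r → ℂ),
          CyclicVec r m₁ m₂ v ∧ annIdeal r m₁ m₂ hcomm v = I) := by
  have : Nonempty (Fin r) := Fin.pos_iff_nonempty.1 hr
  obtain ⟨hdim, horbit, hexists⟩ :=
    stmt17_general (K := ℂ) (A := MvPolynomial (Fin 2) ℂ) (n := Fin r)
  simp only [Fintype.card_fin] at hdim hexists
  refine ⟨fun m₁ m₂ hm v hv ↦ ?_, fun m₁ m₂ n₁ n₂ hm hn v w hv hw ↦ ?_, fun I hI ↦ ?_⟩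
  · rw [annIdeal_eq_orbitAnnihilator]
    exact hdim (evalPair r m₁ m₂ hm) v ((isCyclicVector_evalPair_iff hm).2 hv)
  · rw [annIdeal_eq_orbitAnnihilator, annIdeal_eq_orbitAnnihilator,
      horbit _ _ v w ((isCyclicVector_evalPair_iff hm).2 hv)
        ((isCyclicVector_evalPair_iff hn).2 hw)]
    simp only [forall_conj_evalPair_eq_iff, and_assoc]
  · obtain ⟨φ, v, hv, rfl⟩ := hexists I hI
    obtain ⟨m₁, m₂, hm, rfl⟩ := exists_evalPair_eq φ
    exact ⟨m₁, m₂, hm, v, (isCyclicVector_evalPair_iff hm).1 hv,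
      annIdeal_eq_orbitAnnihilator hm v⟩
end
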